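/- arXiv:1811.11899 — 2 statements merged into one kernel-verified Lean document; each statement's English description precedes it below -/
import Mathlib

section
/- Let C ⊆ ℝⁿ be a nonempty closed convex set with 0 ∈ C, and let rec(C) := {y ∈ ℝⁿ : x + t·y ∈ C for all x ∈ C and all t ≥ 0} be its recession cone. If {π ∈ ℝⁿ : F(Λ₋(π)) = 0, cπ = 0, ∫_{|u|≤1} ⟨π,u⟩ F(du) ≤ ⟨π,b⟩} ∩ rec(C) = {0}, then ψ attains its infimum over C: there exists π* ∈ C ∩ C₀ such that ψ(π*) ≤ ψ(π) for all π ∈ C. -/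
open MeasureTheory
open scoped RealInnerProductSpace ENNReal Topology

/-- The extended-real-valued convex function `ψ` from the paper: on the budget-constraint set
`C₀ = {π | F {u | 1 + ⟨π,u⟩ < 0} = 0}` it equals
`−⟨π,b⟩ − ((p−1)/2)⟨π,cπ⟩ − ∫ (p⁻¹((1+⟨π,u⟩)₊)^p − p⁻¹ − ⟨π,u⟩·1_{|u|≤1}) dF`,
and `+∞` outside of `C₀`. -/
noncomputable def psi (n : ℕ) (p : ℝ) (F : Measure (EuclideanSpace ℝ (Fin n)))
    (b : EuclideanSpace ℝ (Fin n))
    (c : EuclideanSpace ℝ (Fin n) →ₗ[ℝ] EuclideanSpace ℝ (Fin n))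
    (π : EuclideanSpace ℝ (Fin n)) : EReal :=
  if F {u : EuclideanSpace ℝ (Fin n) | 1 + ⟪π, u⟫ < 0} = 0 then
    (((-⟪π, b⟫) - ((p - 1) / 2) * ⟪π, c π⟫ -
      ∫ u, (p⁻¹ * (max (1 + ⟪π, u⟫) 0) ^ p - p⁻¹ -
        Set.indicator {u : EuclideanSpace ℝ (Fin n) | ‖u‖ ≤ 1}
          (fun u => ⟪π, u⟫) u) ∂F : ℝ) : EReal)
  else (⊤ : EReal)

/-!
The sublevel sets of `ψ` are closed and convex, so an unbounded one contains a ray `ℝ₊ y`, `y ≠ 0`.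
Staying in the budget set along the ray forces `⟨y, u⟩ ≥ 0` for `F`-almost every `u`. Since
`ψ (t y)` stays bounded above and the large jumps contribute only `O(t ^ p)`, dividing by `t²` gives
`⟨y, c y⟩ = 0`, and dividing by `t` gives, with Fatou's lemma on the small jumps,
`∫_{|u| ≤ 1} ⟨y, u⟩ dF ≤ ⟨y, b⟩`. Hence the asymptotic cone of every sublevel set lies in the set of
directions excluded by the hypothesis, and the restriction of `ψ` to `C` has bounded sublevel sets.
-/

open Filter Set

section UtilityGain

/-- The power-utility gain `((1 + x)₊ ^ p - 1) / p` of a return `x` on unit wealth. -/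
noncomputable def utilityGain (p x : ℝ) : ℝ := p⁻¹ * (max (1 + x) 0) ^ p - p⁻¹

variable {p x : ℝ}

lemma utilityGain_le_self (hp0 : 0 < p) (hp1 : p ≤ 1) (hx : -1 ≤ x) : utilityGain p x ≤ x := by
  have bernoulli : (1 + x) ^ p ≤ 1 + p * x := rpow_one_add_le_one_add_mul_self hx hp0.le hp1
  calc utilityGain p x = p⁻¹ * (1 + x) ^ p - p⁻¹ := by
        rw [utilityGain, max_eq_left (by linarith)]
    _ ≤ p⁻¹ * (1 + p * x) - p⁻¹ := by gcongr
    _ = x := by field_simp; ring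

/-- Bernoulli's inequality for the exponent `p - 1 ∈ [-1, 0]`, multiplied by `1 + x`. -/
lemma one_add_mul_one_sub_le_rpow_one_add (hp0 : 0 ≤ p) (hp1 : p ≤ 1) (hx : -1 ≤ x) :
    (1 + x) * (1 - (1 - p) * x) ≤ (1 + x) ^ p := by
  have hx' : 0 ≤ 1 + x := by linarith
  have hpow : 0 ≤ (1 + x) ^ p := Real.rpow_nonneg hx' p
  rcases le_total 0 (1 - (1 - p) * x) with hpos | hneg
  · have bernoulli : (1 + x) ^ (1 - p) ≤ 1 + (1 - p) * x :=
      rpow_one_add_le_one_add_mul_self hx (by linarith) (by linarith)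
    calc (1 + x) * (1 - (1 - p) * x)
        = (1 + x) ^ p * (1 + x) ^ (1 - p) * (1 - (1 - p) * x) := by
          rw [← Real.rpow_add_of_nonneg hx' hp0 (by linarith), add_sub_cancel, Real.rpow_one]
      _ ≤ (1 + x) ^ p * (1 + (1 - p) * x) * (1 - (1 - p) * x) := by gcongr
      _ = (1 + x) ^ p * (1 - ((1 - p) * x) ^ 2) := by ring
      _ ≤ (1 + x) ^ p := mul_le_of_le_one_right hpow (by linarith [sq_nonneg ((1 - p) * x)])
  · exact (mul_nonpos_of_nonneg_of_nonpos hx' hneg).trans hpow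

lemma abs_utilityGain_sub_self_le (hp0 : 0 < p) (hp1 : p ≤ 1) (x : ℝ) :
    |utilityGain p x - x| ≤ p⁻¹ * x ^ 2 := by
  have hp_inv : 1 ≤ p⁻¹ := (one_le_inv₀ hp0).mpr hp1
  rcases le_total (-1) x with hx | hx
  · have lower : x - p⁻¹ * x ^ 2 ≤ utilityGain p x :=
      calc x - p⁻¹ * x ^ 2 ≤ x - p⁻¹ * x ^ 2 + x ^ 2 := by linarith [sq_nonneg x]
        _ = p⁻¹ * ((1 + x) * (1 - (1 - p) * x)) - p⁻¹ := by field_simp; ring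
        _ ≤ p⁻¹ * (1 + x) ^ p - p⁻¹ := by
          gcongr; exact one_add_mul_one_sub_le_rpow_one_add hp0.le hp1 hx
        _ = utilityGain p x := by rw [utilityGain, max_eq_left (by linarith)]
    have upper : utilityGain p x ≤ x := utilityGain_le_self hp0 hp1 hx
    rw [abs_of_nonpos (by linarith)]
    linarith
  · have hgain : utilityGain p x = -p⁻¹ := by
      rw [utilityGain, max_eq_right (by linarith), Real.zero_rpow hp0.ne', mul_zero, zero_sub]
    have hx_sq : -x ≤ x ^ 2 := by nlinarith
    have hp_inv_le : p⁻¹ ≤ p⁻¹ * x ^ 2 := le_mul_of_one_le_right (by positivity) (by linarith)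
    have hx_sq_le : x ^ 2 ≤ p⁻¹ * x ^ 2 := le_mul_of_one_le_left (sq_nonneg x) hp_inv
    rw [hgain, abs_le]
    constructor <;> linarith

lemma neg_inv_le_utilityGain (hp : 0 ≤ p) (x : ℝ) : -p⁻¹ ≤ utilityGain p x := by
  have : 0 ≤ p⁻¹ * (max (1 + x) 0) ^ p := by positivity
  rw [utilityGain]
  linarith

lemma utilityGain_nonneg (hp : 0 ≤ p) (hx : 0 ≤ x) : 0 ≤ utilityGain p x := by
  have : 1 ≤ (max (1 + x) 0) ^ p := Real.one_le_rpow (le_max_of_le_left (by linarith)) hp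
  exact sub_nonneg.mpr (le_mul_of_one_le_right (inv_nonneg.mpr hp) this)

lemma utilityGain_le_rpow_abs (hp0 : 0 ≤ p) (hp1 : p ≤ 1) (x : ℝ) :
    utilityGain p x ≤ p⁻¹ * |x| ^ p := by
  have subadditive : (max (1 + x) 0) ^ p ≤ 1 + |x| ^ p :=
    calc (max (1 + x) 0) ^ p ≤ (1 + |x|) ^ p := by
          gcongr; exact max_le (by linarith [le_abs_self x]) (by positivity)
      _ ≤ 1 ^ p + |x| ^ p := Real.rpow_add_le_add_rpow zero_le_one (abs_nonneg x) hp0 hp1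
      _ = 1 + |x| ^ p := by rw [Real.one_rpow]
  calc utilityGain p x ≤ p⁻¹ * (1 + |x| ^ p) - p⁻¹ := by rw [utilityGain]; gcongr
    _ = p⁻¹ * |x| ^ p := by ring

lemma abs_utilityGain_le (hp0 : 0 ≤ p) (hp1 : p ≤ 1) (x : ℝ) :
    |utilityGain p x| ≤ p⁻¹ * (1 + |x| ^ p) := by
  have hp_inv : 0 ≤ p⁻¹ := inv_nonneg.mpr hp0
  have hpow : 0 ≤ p⁻¹ * |x| ^ p := by positivity
  rw [abs_le]
  constructor <;> linarith [neg_inv_le_utilityGain hp0 x, utilityGain_le_rpow_abs hp0 hp1 x]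

lemma continuous_utilityGain (hp : 0 ≤ p) : Continuous (utilityGain p) :=
  ((Continuous.rpow_const (by fun_prop) fun _ => Or.inr hp).const_mul _).sub continuous_const

lemma concaveOn_utilityGain (hp0 : 0 ≤ p) (hp1 : p ≤ 1) :
    ConcaveOn ℝ (Ici (-1)) (utilityGain p) := by
  have hrpow : ConcaveOn ℝ (Ici (-1)) fun x : ℝ => (1 + x) ^ p :=
    ((Real.concaveOn_rpow hp0 hp1).translate_right 1).subset
      (fun x hx => by simpa [neg_le_iff_add_nonneg'] using hx) (convex_Ici _)
  refine ((hrpow.smul (inv_nonneg.mpr hp0)).add_const (-p⁻¹)).congr fun x hx => ?_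
  have : 0 ≤ 1 + x := by linarith [mem_Ici.mp hx]
  simp [utilityGain, max_eq_left this, sub_eq_add_neg]

lemma tendsto_rpow_sub_one_atTop (hp : p < 1) : Tendsto (fun t : ℝ => t ^ (p - 1)) atTop (𝓝 0) := by
  simpa using tendsto_rpow_neg_atTop (sub_pos.mpr hp)

lemma tendsto_utilityGain_mul_div_atTop (hp0 : 0 ≤ p) (hp1 : p < 1) (hx : 0 ≤ x) :
    Tendsto (fun t => utilityGain p (t * x) / t) atTop (𝓝 0) := by
  have hbound : Tendsto (fun t : ℝ => p⁻¹ * x ^ p * t ^ (p - 1)) atTop (𝓝 0) := by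
    simpa using (tendsto_rpow_sub_one_atTop hp1).const_mul (p⁻¹ * x ^ p)
  refine tendsto_of_tendsto_of_tendsto_of_le_of_le' tendsto_const_nhds hbound ?_ ?_ <;>
    filter_upwards [eventually_gt_atTop 0] with t ht
  · exact div_nonneg (utilityGain_nonneg hp0 (by positivity)) ht.le
  · calc utilityGain p (t * x) / t ≤ p⁻¹ * |t * x| ^ p / t := by
          gcongr; exact utilityGain_le_rpow_abs hp0 hp1.le _
      _ = p⁻¹ * x ^ p * t ^ (p - 1) := by
          rw [abs_of_nonneg (by positivity), Real.mul_rpow ht.le hx, Real.rpow_sub_one ht.ne']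
          ring

end UtilityGain

section General

lemma exists_isMinOn_of_asymptoticCone_sublevel_subset {V : Type*} [NormedAddCommGroup V]
    [NormedSpace ℝ V] [FiniteDimensional ℝ V] {s : Set V} {f : V → ℝ} (hs : IsClosed s)
    (hf : ContinuousOn f s) {x₀ : V} (hx₀ : x₀ ∈ s)
    (hcone : asymptoticCone ℝ {x ∈ s | f x ≤ f x₀} ⊆ {0}) : ∃ x ∈ s, IsMinOn f s x := by
  have : ProperSpace V := FiniteDimensional.proper_real V
  have hbdd : Bornology.IsBounded {x ∈ s | f x ≤ f x₀} :=
    isBounded_iff_asymptoticCone_subset_singleton.mpr hcone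
  refine hf.exists_isMinOn' hs hx₀ ?_
  rw [← Metric.cobounded_eq_cocompact, eventually_inf_principal]
  filter_upwards [Bornology.isBounded_def.mp hbdd] with x hx hxs
  exact (not_le.mp fun hle => hx ⟨hxs, hle⟩).le

lemma asymptoticCone_subset_recessionCone {V : Type*} [NormedAddCommGroup V] [NormedSpace ℝ V]
    {C : Set V} (hconv : Convex ℝ C) (hclosed : IsClosed C) :
    asymptoticCone ℝ C ⊆ {y | ∀ x ∈ C, ∀ t : ℝ, 0 ≤ t → x + t • y ∈ C} := by
  intro y hy x hx t ht
  simpa [add_comm] using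
    hconv.smul_vadd_mem_of_isClosed_of_mem_asymptoticCone hclosed ht hy hx

lemma coe_lintegral_ofReal_le_of_tendsto {α ι : Type*} [MeasurableSpace α] {μ : Measure α}
    {l : Filter ι} [l.NeBot] [l.IsCountablyGenerated] {f : ι → α → ℝ} {g : α → ℝ} {r : ι → ℝ}
    {β : ℝ} (hf : ∀ i, Integrable (f i) μ) (hf_nonneg : ∀ᶠ i in l, 0 ≤ᵐ[μ] f i)
    (hf_le : ∀ᶠ i in l, ∫ a, f i a ∂μ ≤ r i)
    (hfg : ∀ᵐ a ∂μ, Tendsto (fun i => f i a) l (𝓝 (g a))) (hr : Tendsto r l (𝓝 β)) :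
    ((∫⁻ a, ENNReal.ofReal (g a) ∂μ : ℝ≥0∞) : EReal) ≤ β := by
  have hβ : 0 ≤ β := by
    refine ge_of_tendsto hr ?_
    filter_upwards [hf_nonneg, hf_le] with i hi hle using (integral_nonneg_of_ae hi).trans hle
  have fatou : ∫⁻ a, ENNReal.ofReal (g a) ∂μ ≤ ENNReal.ofReal β :=
    calc ∫⁻ a, ENNReal.ofReal (g a) ∂μ
        = ∫⁻ a, liminf (fun i => ENNReal.ofReal (f i a)) l ∂μ :=
          lintegral_congr_ae (hfg.mono fun a ha => (ENNReal.tendsto_ofReal ha).liminf_eq.symm)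
      _ ≤ liminf (fun i => ∫⁻ a, ENNReal.ofReal (f i a) ∂μ) l :=
          lintegral_liminf_le' fun i => (hf i).aemeasurable.ennreal_ofReal
      _ ≤ liminf (fun i => ENNReal.ofReal (r i)) l := by
          refine liminf_le_liminf ?_
          filter_upwards [hf_nonneg, hf_le] with i hi hle
          rw [← ofReal_integral_eq_lintegral_ofReal (hf i) hi]
          exact ENNReal.ofReal_le_ofReal hle
      _ = ENNReal.ofReal β := (ENNReal.tendsto_ofReal hr).liminf_eq
  calc ((∫⁻ a, ENNReal.ofReal (g a) ∂μ : ℝ≥0∞) : EReal)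
      ≤ ((ENNReal.ofReal β : ℝ≥0∞) : EReal) := EReal.coe_ennreal_le_coe_ennreal_iff.mpr fatou
    _ = β := by rw [EReal.coe_ennreal_ofReal, max_eq_left hβ]

lemma nonpos_of_forall_mul_sq_le {p a α β M : ℝ} (hp : p < 2)
    (h : ∀ t : ℝ, 0 < t → a * t ^ 2 ≤ α + t * β + t ^ p * M) : a ≤ 0 := by
  have hinv : Tendsto (fun t : ℝ => t⁻¹) atTop (𝓝 0) := tendsto_inv_atTop_zero
  have hrpow : Tendsto (fun t : ℝ => t ^ (p - 2)) atTop (𝓝 0) := by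
    simpa using tendsto_rpow_neg_atTop (sub_pos.mpr hp)
  have hlim : Tendsto (fun t : ℝ => t⁻¹ ^ 2 * α + t⁻¹ * β + t ^ (p - 2) * M) atTop (𝓝 0) := by
    simpa using (((hinv.pow 2).mul_const α).add (hinv.mul_const β)).add (hrpow.mul_const M)
  refine ge_of_tendsto hlim ?_
  filter_upwards [eventually_gt_atTop 0] with t ht
  rw [Real.rpow_sub ht, Real.rpow_two]
  calc a = t⁻¹ ^ 2 * (a * t ^ 2) := by field_simp
    _ ≤ t⁻¹ ^ 2 * (α + t * β + t ^ p * M) := by gcongr; exact h t ht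
    _ = _ := by field_simp

variable {E : Type*} [NormedAddCommGroup E] [InnerProductSpace ℝ E] {c : E →ₗ[ℝ] E}

lemma isPositive_of_inner_map_nonneg (hsymm : ∀ x y : E, ⟪c x, y⟫ = ⟪x, c y⟫)
    (hnonneg : ∀ x : E, 0 ≤ ⟪x, c x⟫) : c.IsPositive :=
  ⟨hsymm, fun x => by simpa [real_inner_comm] using hnonneg x⟩

lemma inner_map_self_nonneg (hc : c.IsPositive) (x : E) : 0 ≤ ⟪x, c x⟫ := by
  simpa using hc.re_inner_nonneg_right x

lemma map_eq_zero_of_inner_map_self_eq_zero (hc : c.IsPositive) {y : E} (hy : ⟪y, c y⟫ = 0) :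
    c y = 0 := by
  let B : LinearMap.BilinForm ℝ E := (innerₗ E).comp c
  have hB_nonneg (x : E) : 0 ≤ B x x :=
    (inner_map_self_nonneg hc x).trans_eq (real_inner_comm _ _)
  have hB_symm : LinearMap.IsSymm B :=
    ⟨fun x z => by simpa [B, real_inner_comm] using hc.isSymmetric x z⟩
  have hker : B y = 0 := (B.apply_apply_same_eq_zero_iff hB_nonneg hB_symm).mp (by
    simpa [B, real_inner_comm] using hy)
  exact inner_self_eq_zero.mp (LinearMap.congr_fun hker (c y))

lemma convexOn_inner_map_self (hc : c.IsPositive) : ConvexOn ℝ univ fun x : E => ⟪x, c x⟫ := by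
  refine ⟨convex_univ, fun x _ y _ s t hs ht hst => ?_⟩
  have hsymm : ⟪y, c x⟫ = ⟪x, c y⟫ := by rw [real_inner_comm, hc.isSymmetric x y]
  have hdefect : 0 ≤ s * t * ⟪x - y, c (x - y)⟫ :=
    mul_nonneg (mul_nonneg hs ht) (inner_map_self_nonneg hc _)
  obtain rfl : t = 1 - s := by linarith
  simp only [map_sub, map_add, map_smul, inner_sub_left, inner_sub_right, inner_add_left,
    inner_add_right, real_inner_smul_left, real_inner_smul_right, smul_eq_mul, hsymm]
    at hdefect ⊢
  linarith

end General

section BudgetSet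

variable {E : Type*} [NormedAddCommGroup E] [InnerProductSpace ℝ E] [MeasurableSpace E]

/-- The budget-constraint set `C₀` of the portfolios whose wealth almost surely stays nonnegative
after a jump. -/
def budgetSet (F : Measure E) : Set E := {π | F {u | 1 + ⟪π, u⟫ < 0} = 0}

variable {F : Measure E}

lemma mem_budgetSet_iff_ae {π : E} : π ∈ budgetSet F ↔ ∀ᵐ u ∂F, -1 ≤ ⟪π, u⟫ := by
  simp only [budgetSet, mem_ofPred_eq, ae_iff, not_le, lt_neg_iff_add_neg', add_comm]

lemma zero_mem_budgetSet : (0 : E) ∈ budgetSet F := by simp [mem_budgetSet_iff_ae]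

lemma isClosed_budgetSet : IsClosed (budgetSet F) := by
  refine IsSeqClosed.isClosed fun x π hx hlim => mem_budgetSet_iff_ae.mpr ?_
  filter_upwards [ae_all_iff.mpr fun k => mem_budgetSet_iff_ae.mp (hx k)] with u hu
  exact ge_of_tendsto' (hlim.inner tendsto_const_nhds) hu

lemma convex_budgetSet : Convex ℝ (budgetSet F) := by
  intro π hπ ρ hρ s t hs ht hst
  rw [mem_budgetSet_iff_ae] at hπ hρ ⊢
  filter_upwards [hπ, hρ] with u hπu hρu
  rw [inner_add_left, real_inner_smul_left, real_inner_smul_left]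
  exact convex_Ici (-1 : ℝ) hπu hρu hs ht hst

lemma ae_inner_nonneg_of_forall_smul_mem_budgetSet {y : E}
    (hy : ∀ t : ℝ, 0 ≤ t → t • y ∈ budgetSet F) : ∀ᵐ u ∂F, 0 ≤ ⟪y, u⟫ := by
  have hall : ∀ᵐ u ∂F, ∀ k : ℕ, -1 ≤ ⟪(k : ℝ) • y, u⟫ :=
    ae_all_iff.mpr fun k => mem_budgetSet_iff_ae.mp (hy k k.cast_nonneg)
  filter_upwards [hall] with u hu
  by_contra! hneg
  obtain ⟨k, hk⟩ := exists_nat_gt (1 / -⟪y, u⟫)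
  have hku := hu k
  rw [real_inner_smul_left] at hku
  rw [div_lt_iff₀ (by linarith)] at hk
  linarith

end BudgetSet

section JumpMoments

variable {E : Type*} [NormedAddCommGroup E] [MeasurableSpace E]

/-- The jump measure `F` integrates `|u|²` over the small jumps and `|u| ^ p` over the large ones:
what the Lévy property and (A_F) provide for the integral in `ψ`. -/
structure HasJumpMoments (p : ℝ) (F : Measure E) : Prop where
  small : IntegrableOn (fun u : E => ‖u‖ ^ 2) {u | ‖u‖ ≤ 1} F
  large : IntegrableOn (fun u : E => ‖u‖ ^ p) {u | 1 < ‖u‖} F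

variable [OpensMeasurableSpace E] {F : Measure E}

lemma measurableSet_norm_le_one : MeasurableSet {u : E | ‖u‖ ≤ 1} :=
  measurableSet_le measurable_norm measurable_const

lemma integrableOn_norm_sq_of_lintegral_min_ne_top
    (hF : ∫⁻ u, ENNReal.ofReal (min (‖u‖ ^ (2 : ℕ)) 1) ∂F ≠ ⊤) :
    IntegrableOn (fun u : E => ‖u‖ ^ 2) {u | ‖u‖ ≤ 1} F := by
  have hmin : Integrable (fun u : E => min (‖u‖ ^ 2) 1) F :=
    (lintegral_ofReal_ne_top_iff_integrable (by fun_prop)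
      (ae_of_all _ fun u => by positivity)).mp hF
  refine hmin.integrableOn.congr_fun (fun u hu => ?_) measurableSet_norm_le_one
  exact min_eq_left (pow_le_one₀ (norm_nonneg u) hu)

lemma integrableOn_norm_rpow_of_lintegral_ne_top {p : ℝ}
    (hF : ∫⁻ u in {u : E | 1 < ‖u‖}, ENNReal.ofReal (‖u‖ ^ p) ∂F ≠ ⊤) :
    IntegrableOn (fun u : E => ‖u‖ ^ p) {u | 1 < ‖u‖} F :=
  (lintegral_ofReal_ne_top_iff_integrable (measurable_norm.pow_const p).aestronglyMeasurable
    (ae_of_all _ fun u => by positivity)).mp hF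

lemma hasJumpMoments_of_lintegral_ne_top {p : ℝ}
    (hmin : ∫⁻ u, ENNReal.ofReal (min (‖u‖ ^ (2 : ℕ)) 1) ∂F ≠ ⊤)
    (hlarge : ∫⁻ u in {u : E | 1 < ‖u‖}, ENNReal.ofReal (‖u‖ ^ p) ∂F ≠ ⊤) :
    HasJumpMoments p F :=
  ⟨integrableOn_norm_sq_of_lintegral_min_ne_top hmin,
    integrableOn_norm_rpow_of_lintegral_ne_top hlarge⟩

end JumpMoments

section Objective

variable {E : Type*} [NormedAddCommGroup E] [InnerProductSpace ℝ E]

/-- The integrand of `ψ`: the utility gain of the portfolio `π` under a jump `u`, compensated by its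
linear part for small jumps. -/
noncomputable def compensatedGain (p : ℝ) (π u : E) : ℝ :=
  utilityGain p ⟪π, u⟫ - indicator {u : E | ‖u‖ ≤ 1} (fun u => ⟪π, u⟫) u

variable {p : ℝ}

lemma compensatedGain_of_norm_le (π : E) {u : E} (hu : ‖u‖ ≤ 1) :
    compensatedGain p π u = utilityGain p ⟪π, u⟫ - ⟪π, u⟫ := by
  rw [compensatedGain, indicator_of_mem (by exact hu)]

lemma compensatedGain_of_lt_norm (π : E) {u : E} (hu : 1 < ‖u‖) :
    compensatedGain p π u = utilityGain p ⟪π, u⟫ := by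
  rw [compensatedGain, indicator_of_notMem (by simpa using hu), sub_zero]

lemma abs_compensatedGain_le_of_norm_le (hp0 : 0 < p) (hp1 : p ≤ 1) {R : ℝ} {π u : E}
    (hπ : ‖π‖ ≤ R) (hu : ‖u‖ ≤ 1) : |compensatedGain p π u| ≤ p⁻¹ * R ^ 2 * ‖u‖ ^ 2 := by
  have hinner : |⟪π, u⟫| ≤ R * ‖u‖ := (abs_real_inner_le_norm π u).trans (by gcongr)
  calc |compensatedGain p π u| ≤ p⁻¹ * ⟪π, u⟫ ^ 2 := by
        rw [compensatedGain_of_norm_le π hu]; exact abs_utilityGain_sub_self_le hp0 hp1 _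
    _ ≤ p⁻¹ * (R * ‖u‖) ^ 2 := by rw [← sq_abs]; gcongr
    _ = p⁻¹ * R ^ 2 * ‖u‖ ^ 2 := by ring

lemma abs_compensatedGain_le_of_lt_norm (hp0 : 0 ≤ p) (hp1 : p ≤ 1) {R : ℝ} {π u : E}
    (hπ : ‖π‖ ≤ R) (hu : 1 < ‖u‖) : |compensatedGain p π u| ≤ p⁻¹ * (1 + R ^ p) * ‖u‖ ^ p := by
  have hR : 0 ≤ R := (norm_nonneg π).trans hπ
  have hinner : |⟪π, u⟫| ≤ R * ‖u‖ := (abs_real_inner_le_norm π u).trans (by gcongr)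
  calc |compensatedGain p π u| ≤ p⁻¹ * (1 + |⟪π, u⟫| ^ p) := by
        rw [compensatedGain_of_lt_norm π hu]; exact abs_utilityGain_le hp0 hp1 _
    _ ≤ p⁻¹ * (‖u‖ ^ p + (R * ‖u‖) ^ p) := by gcongr; exact Real.one_le_rpow hu.le hp0
    _ = p⁻¹ * (1 + R ^ p) * ‖u‖ ^ p := by rw [Real.mul_rpow hR (norm_nonneg u)]; ring

lemma continuous_compensatedGain_left (hp : 0 ≤ p) (u : E) :
    Continuous fun π : E => compensatedGain p π u := by
  have hinner : Continuous fun π : E => ⟪π, u⟫ := by fun_prop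
  refine ((continuous_utilityGain hp).comp hinner).sub ?_
  by_cases hu : ‖u‖ ≤ 1 <;> simp [indicator, hu, hinner, continuous_const]

lemma concaveOn_compensatedGain_left (hp0 : 0 ≤ p) (hp1 : p ≤ 1) (u : E) :
    ConcaveOn ℝ {π : E | -1 ≤ ⟪π, u⟫} fun π => compensatedGain p π u := by
  let ℓ : E →ₗ[ℝ] ℝ := (innerₗ E).flip u
  have hgain : ConcaveOn ℝ {π : E | -1 ≤ ⟪π, u⟫} fun π => utilityGain p ⟪π, u⟫ :=
    (concaveOn_utilityGain hp0 hp1).comp_linearMap ℓ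
  rcases le_or_gt ‖u‖ 1 with hu | hu
  · simp only [compensatedGain_of_norm_le _ hu]
    exact hgain.sub (ℓ.convexOn hgain.1)
  · simpa only [compensatedGain_of_lt_norm _ hu] using hgain

lemma compensatedGain_nonpos_of_norm_le (hp0 : 0 < p) (hp1 : p ≤ 1) {π u : E} (hu : ‖u‖ ≤ 1)
    (hπu : -1 ≤ ⟪π, u⟫) : compensatedGain p π u ≤ 0 := by
  rw [compensatedGain_of_norm_le π hu]
  exact sub_nonpos.mpr (utilityGain_le_self hp0 hp1 hπu)

lemma compensatedGain_smul_le_of_lt_norm (hp0 : 0 ≤ p) (hp1 : p ≤ 1) {t : ℝ} (ht : 0 ≤ t) (y : E)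
    {u : E} (hu : 1 < ‖u‖) :
    compensatedGain p (t • y) u ≤ t ^ p * (p⁻¹ * ‖y‖ ^ p) * ‖u‖ ^ p := by
  have hinner : |⟪t • y, u⟫| ≤ t * ‖y‖ * ‖u‖ := by
    simpa [norm_smul, abs_of_nonneg ht] using abs_real_inner_le_norm (t • y) u
  calc compensatedGain p (t • y) u ≤ p⁻¹ * |⟪t • y, u⟫| ^ p := by
        rw [compensatedGain_of_lt_norm _ hu]; exact utilityGain_le_rpow_abs hp0 hp1 _
    _ ≤ p⁻¹ * (t * ‖y‖ * ‖u‖) ^ p := by gcongr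
    _ = t ^ p * (p⁻¹ * ‖y‖ ^ p) * ‖u‖ ^ p := by
        rw [Real.mul_rpow (by positivity) (by positivity), Real.mul_rpow ht (by positivity)]
        ring

lemma tendsto_neg_compensatedGain_smul_div_atTop (hp0 : 0 ≤ p) (hp1 : p < 1) {y u : E}
    (hu : ‖u‖ ≤ 1) (hyu : 0 ≤ ⟪y, u⟫) :
    Tendsto (fun t : ℝ => -compensatedGain p (t • y) u / t) atTop (𝓝 ⟪y, u⟫) := by
  have hlim : Tendsto (fun t => ⟪y, u⟫ - utilityGain p (t * ⟪y, u⟫) / t) atTop (𝓝 ⟪y, u⟫) := by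
    simpa using (tendsto_utilityGain_mul_div_atTop hp0 hp1 hyu).const_sub ⟪y, u⟫
  refine hlim.congr' ?_
  filter_upwards [eventually_ne_atTop 0] with t ht
  rw [compensatedGain_of_norm_le _ hu, real_inner_smul_left]
  field_simp
  ring

variable [MeasurableSpace E] {F : Measure E}

/-- The real-valued formula for `ψ` on the budget set. -/
noncomputable def objective (p : ℝ) (F : Measure E) (b : E) (c : E →ₗ[ℝ] E) (π : E) : ℝ :=
  -⟪π, b⟫ - (p - 1) / 2 * ⟪π, c π⟫ - ∫ u, compensatedGain p π u ∂F

/-- The directions `y` with `F(Λ₋(y)) = 0`, `c y = 0` and `∫_{|u| ≤ 1} ⟨y, u⟩ dF ≤ ⟨y, b⟩`, along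
which `ψ` does not tend to infinity. The integral is taken in `ℝ≥0∞` because it may diverge; there
`ENNReal.ofReal` discards nothing but a null set. -/
def recessionDirections (F : Measure E) (b : E) (c : E →ₗ[ℝ] E) : Set E :=
  {y | F {u | ⟪y, u⟫ < 0} = 0 ∧ c y = 0 ∧
    ((∫⁻ u in {u : E | ‖u‖ ≤ 1}, ENNReal.ofReal ⟪y, u⟫ ∂F : ℝ≥0∞) : EReal) ≤ ((⟪y, b⟫ : ℝ) : EReal)}

lemma objective_zero (b : E) (c : E →ₗ[ℝ] E) : objective p F b c 0 = 0 := by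
  simp [objective, compensatedGain, utilityGain]

variable [OpensMeasurableSpace E]

lemma measurable_compensatedGain (p : ℝ) (π : E) : Measurable (compensatedGain p π) := by
  have hinner : Measurable fun u : E => ⟪π, u⟫ := (by fun_prop : Continuous _).measurable
  exact (((((hinner.const_add 1).max measurable_const).pow_const p).const_mul _).sub_const _).sub
    (hinner.indicator measurableSet_norm_le_one)

lemma exists_integrable_bound_compensatedGain (hp0 : 0 < p) (hp1 : p ≤ 1)
    (hF : HasJumpMoments p F) (R : ℝ) :
    ∃ g : E → ℝ, Integrable g F ∧ ∀ π : E, ‖π‖ ≤ R → ∀ u, ‖compensatedGain p π u‖ ≤ g u := by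
  classical
  have hcompl : {u : E | ‖u‖ ≤ 1}ᶜ = {u | 1 < ‖u‖} := by ext; simp
  refine ⟨{u : E | ‖u‖ ≤ 1}.piecewise (fun u => p⁻¹ * R ^ 2 * ‖u‖ ^ 2)
    (fun u => p⁻¹ * (1 + R ^ p) * ‖u‖ ^ p),
    Integrable.piecewise measurableSet_norm_le_one (hF.small.const_mul _)
      (hcompl ▸ hF.large.const_mul _),
    fun π hπ u => ?_⟩
  rcases le_or_gt ‖u‖ 1 with hu | hu
  · rw [piecewise_eq_of_mem _ _ _ (by exact hu)]
    exact abs_compensatedGain_le_of_norm_le hp0 hp1 hπ hu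
  · rw [piecewise_eq_of_notMem _ _ _ (by simpa using hu)]
    exact abs_compensatedGain_le_of_lt_norm hp0.le hp1 hπ hu

lemma integrable_compensatedGain (hp0 : 0 < p) (hp1 : p ≤ 1) (hF : HasJumpMoments p F)
    (π : E) : Integrable (compensatedGain p π) F := by
  obtain ⟨g, hg, hbound⟩ := exists_integrable_bound_compensatedGain hp0 hp1 hF ‖π‖
  exact hg.mono' (measurable_compensatedGain p π).aestronglyMeasurable
    (ae_of_all _ (hbound π le_rfl))

lemma continuous_integral_compensatedGain (hp0 : 0 < p) (hp1 : p ≤ 1) (hF : HasJumpMoments p F) :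
    Continuous fun π : E => ∫ u, compensatedGain p π u ∂F := by
  refine continuous_iff_continuousAt.mpr fun π₀ => ?_
  obtain ⟨g, hg, hbound⟩ := exists_integrable_bound_compensatedGain hp0 hp1 hF (‖π₀‖ + 1)
  have hnear : ∀ᶠ π in 𝓝 π₀, ‖π‖ ≤ ‖π₀‖ + 1 :=
    (continuous_norm.tendsto π₀).eventually_le_const (lt_add_one _)
  exact continuousAt_of_dominated
    (.of_forall fun π => (measurable_compensatedGain p π).aestronglyMeasurable)
    (hnear.mono fun π hπ => ae_of_all _ (hbound π hπ)) hg
    (ae_of_all _ fun u => (continuous_compensatedGain_left hp0.le u).continuousAt)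

lemma concaveOn_integral_compensatedGain (hp0 : 0 < p) (hp1 : p ≤ 1) (hF : HasJumpMoments p F) :
    ConcaveOn ℝ (budgetSet F) fun π : E => ∫ u, compensatedGain p π u ∂F := by
  have hint := integrable_compensatedGain hp0 hp1 hF
  refine ⟨convex_budgetSet, fun π hπ ρ hρ s t hs ht hst => ?_⟩
  rw [smul_eq_mul, smul_eq_mul, ← integral_const_mul, ← integral_const_mul,
    ← integral_add ((hint π).const_mul s) ((hint ρ).const_mul t)]
  refine integral_mono_ae (((hint π).const_mul s).add ((hint ρ).const_mul t)) (hint _) ?_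
  filter_upwards [mem_budgetSet_iff_ae.mp hπ, mem_budgetSet_iff_ae.mp hρ] with u hπu hρu
  exact (concaveOn_compensatedGain_left hp0.le hp1 u).2 hπu hρu hs ht hst

lemma convexOn_objective (hp0 : 0 < p) (hp1 : p ≤ 1) (hF : HasJumpMoments p F) (b : E)
    {c : E →ₗ[ℝ] E} (hc : c.IsPositive) :
    ConvexOn ℝ (budgetSet F) (objective p F b c) := by
  have hlin : ConvexOn ℝ (budgetSet F) fun π => -⟪π, b⟫ :=
    (-(innerₗ E).flip b).convexOn convex_budgetSet
  have hquad : ConvexOn ℝ (budgetSet F) fun π => (1 - p) / 2 * ⟪π, c π⟫ :=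
    ((convexOn_inner_map_self hc).subset (subset_univ _) convex_budgetSet).smul (by linarith)
  have hjump := concaveOn_integral_compensatedGain hp0 hp1 hF
  refine ((hlin.add hquad).sub hjump).congr fun π _ => ?_
  simp only [objective, Pi.add_apply, Pi.sub_apply]
  ring

lemma continuous_objective [FiniteDimensional ℝ E] (hp0 : 0 < p) (hp1 : p ≤ 1)
    (hF : HasJumpMoments p F) (b : E) (c : E →ₗ[ℝ] E) : Continuous (objective p F b c) := by
  have hc : Continuous c := c.continuous_of_finiteDimensional
  exact Continuous.sub (by fun_prop) (continuous_integral_compensatedGain hp0 hp1 hF)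

lemma setIntegral_compensatedGain_smul_le (hp0 : 0 < p) (hp1 : p ≤ 1)
    (hF : HasJumpMoments p F) {t : ℝ} (ht : 0 ≤ t) (y : E) :
    ∫ u in {u | 1 < ‖u‖}, compensatedGain p (t • y) u ∂F ≤
      t ^ p * (p⁻¹ * ‖y‖ ^ p * ∫ u in {u | 1 < ‖u‖}, ‖u‖ ^ p ∂F) := by
  rw [← mul_assoc, ← integral_const_mul]
  exact setIntegral_mono_on (integrable_compensatedGain hp0 hp1 hF _).integrableOn
    (hF.large.const_mul _) (measurableSet_lt measurable_const measurable_norm)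
    fun u hu => compensatedGain_smul_le_of_lt_norm hp0.le hp1 ht y hu

lemma setIntegral_neg_compensatedGain_smul_add_le (hp0 : 0 < p) (hp1 : p ≤ 1)
    (hF : HasJumpMoments p F) (b : E) (c : E →ₗ[ℝ] E) {t : ℝ} (ht : 0 ≤ t) (y : E) :
    (∫ u in {u | ‖u‖ ≤ 1}, -compensatedGain p (t • y) u ∂F) + (1 - p) / 2 * ⟪y, c y⟫ * t ^ 2 ≤
      objective p F b c (t • y) + t * ⟪y, b⟫ +
        t ^ p * (p⁻¹ * ‖y‖ ^ p * ∫ u in {u | 1 < ‖u‖}, ‖u‖ ^ p ∂F) := by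
  have hcompl : {u : E | ‖u‖ ≤ 1}ᶜ = {u | 1 < ‖u‖} := by ext; simp
  have hsplit := integral_add_compl measurableSet_norm_le_one
    (integrable_compensatedGain hp0 hp1 hF (t • y))
  rw [hcompl] at hsplit
  have hlarge_le := setIntegral_compensatedGain_smul_le hp0 hp1 hF ht y
  rw [integral_neg, objective, map_smul, real_inner_smul_left, real_inner_smul_left,
    real_inner_smul_right]
  linarith

section Recession

variable {α : ℝ} {y b : E} {c : E →ₗ[ℝ] E}

lemma ae_restrict_neg_compensatedGain_smul_nonneg (hp0 : 0 < p) (hp1 : p ≤ 1)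
    (hy : ∀ᵐ u ∂F, 0 ≤ ⟪y, u⟫) {t : ℝ} (ht : 0 ≤ t) :
    0 ≤ᵐ[F.restrict {u | ‖u‖ ≤ 1}] fun u => -compensatedGain p (t • y) u := by
  filter_upwards [ae_restrict_of_ae hy,
    ae_restrict_mem measurableSet_norm_le_one] with u hyu hu
  have hinner : 0 ≤ ⟪t • y, u⟫ := by rw [real_inner_smul_left]; positivity
  exact neg_nonneg.mpr (compensatedGain_nonpos_of_norm_le hp0 hp1 hu (by linarith))

lemma map_eq_zero_of_forall_objective_smul_le (hp0 : 0 < p) (hp1 : p < 1)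
    (hF : HasJumpMoments p F) (hc : c.IsPositive)
    (hy : ∀ᵐ u ∂F, 0 ≤ ⟪y, u⟫) (hα : ∀ t : ℝ, 0 ≤ t → objective p F b c (t • y) ≤ α) :
    c y = 0 := by
  have hle : (1 - p) / 2 * ⟪y, c y⟫ ≤ 0 := by
    refine nonpos_of_forall_mul_sq_le (p := p) (α := α) (β := ⟪y, b⟫)
      (M := p⁻¹ * ‖y‖ ^ p * ∫ u in {u | 1 < ‖u‖}, ‖u‖ ^ p ∂F) (by linarith) fun t ht => ?_
    have hgrowth := setIntegral_neg_compensatedGain_smul_add_le hp0 hp1.le hF b c ht.le y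
    have hnonneg := integral_nonneg_of_ae
      (ae_restrict_neg_compensatedGain_smul_nonneg hp0 hp1.le hy ht.le)
    linarith [hα t ht.le]
  have hnonpos : ⟪y, c y⟫ ≤ 0 := nonpos_of_mul_nonpos_right hle (by linarith)
  exact map_eq_zero_of_inner_map_self_eq_zero hc (hnonpos.antisymm (inner_map_self_nonneg hc y))

lemma lintegral_inner_le_of_forall_objective_smul_le (hp0 : 0 < p) (hp1 : p < 1)
    (hF : HasJumpMoments p F) (hcy : 0 ≤ ⟪y, c y⟫)
    (hy : ∀ᵐ u ∂F, 0 ≤ ⟪y, u⟫) (hα : ∀ t : ℝ, 0 ≤ t → objective p F b c (t • y) ≤ α) :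
    ((∫⁻ u in {u : E | ‖u‖ ≤ 1}, ENNReal.ofReal ⟪y, u⟫ ∂F : ℝ≥0∞) : EReal) ≤
      ((⟪y, b⟫ : ℝ) : EReal) := by
  set M := p⁻¹ * ‖y‖ ^ p * ∫ u in {u | 1 < ‖u‖}, ‖u‖ ^ p ∂F
  have hbound : Tendsto (fun t : ℝ => t⁻¹ * α + ⟪y, b⟫ + t ^ (p - 1) * M) atTop (𝓝 ⟪y, b⟫) := by
    simpa using ((tendsto_inv_atTop_zero.mul_const α).add_const ⟪y, b⟫).add
      ((tendsto_rpow_sub_one_atTop hp1).mul_const M)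
  refine coe_lintegral_ofReal_le_of_tendsto
    (f := fun (t : ℝ) u => -compensatedGain p (t • y) u / t)
    (fun t => ((integrable_compensatedGain hp0 hp1.le hF _).neg.div_const t).integrableOn)
    ?nonneg ?bound ?limit hbound
  case nonneg =>
    filter_upwards [eventually_ge_atTop 0] with t ht
    filter_upwards [ae_restrict_neg_compensatedGain_smul_nonneg hp0 hp1.le hy ht] with u hu
    exact div_nonneg hu ht
  case bound =>
    filter_upwards [eventually_gt_atTop 0] with t ht
    have hgrowth := setIntegral_neg_compensatedGain_smul_add_le hp0 hp1.le hF b c ht.le y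
    have hquad : 0 ≤ (1 - p) / 2 * ⟪y, c y⟫ * t ^ 2 :=
      mul_nonneg (mul_nonneg (by linarith) hcy) (sq_nonneg t)
    rw [integral_div, div_le_iff₀ ht, Real.rpow_sub_one ht.ne']
    field_simp
    linarith [hα t ht.le]
  case limit =>
    filter_upwards [ae_restrict_of_ae hy,
      ae_restrict_mem measurableSet_norm_le_one] with u hyu hu
    exact tendsto_neg_compensatedGain_smul_div_atTop hp0.le hp1 hu hyu

lemma mem_recessionDirections_of_forall_smul_mem_sublevel (hp0 : 0 < p) (hp1 : p < 1)
    (hF : HasJumpMoments p F) (hc : c.IsPositive)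
    (hy : ∀ t : ℝ, 0 ≤ t → t • y ∈ {π ∈ budgetSet F | objective p F b c π ≤ α}) :
    y ∈ recessionDirections F b c := by
  have hnonneg : ∀ᵐ u ∂F, 0 ≤ ⟪y, u⟫ :=
    ae_inner_nonneg_of_forall_smul_mem_budgetSet fun t ht => (hy t ht).1
  have hα (t : ℝ) (ht : 0 ≤ t) : objective p F b c (t • y) ≤ α := (hy t ht).2
  exact ⟨by simpa [ae_iff] using hnonneg,
    map_eq_zero_of_forall_objective_smul_le hp0 hp1 hF hc hnonneg hα,
    lintegral_inner_le_of_forall_objective_smul_le hp0 hp1 hF (inner_map_self_nonneg hc y)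
      hnonneg hα⟩

variable [FiniteDimensional ℝ E]

lemma asymptoticCone_sublevel_objective_subset (hp0 : 0 < p) (hp1 : p < 1)
    (hF : HasJumpMoments p F) (hc : c.IsPositive) (α : ℝ) :
    asymptoticCone ℝ {π ∈ budgetSet F | objective p F b c π ≤ α} ⊆ recessionDirections F b c := by
  set S := {π ∈ budgetSet F | objective p F b c π ≤ max α 0}
  have hS_closed : IsClosed S :=
    isClosed_budgetSet.inter (isClosed_le (continuous_objective hp0 hp1.le hF b c) continuous_const)
  have hS_convex : Convex ℝ S := (convexOn_objective hp0 hp1.le hF b hc).convex_le _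
  have hS_zero : (0 : E) ∈ S := ⟨zero_mem_budgetSet, by simp [objective_zero]⟩
  have hsub : {π ∈ budgetSet F | objective p F b c π ≤ α} ⊆ S :=
    fun π hπ => ⟨hπ.1, hπ.2.trans (le_max_left _ _)⟩
  intro y hy
  refine mem_recessionDirections_of_forall_smul_mem_sublevel hp0 hp1 hF hc (α := max α 0)
    fun t ht => ?_
  simpa only [zero_add] using asymptoticCone_subset_recessionCone hS_convex hS_closed
    (asymptoticCone_mono hsub hy) 0 hS_zero t ht

theorem psi_attains_infimum_general (hp0 : 0 < p) (hp1 : p < 1)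
    (hF : HasJumpMoments p F) (hc : c.IsPositive)
    {C : Set E} (hC : IsClosed C) (hne : (C ∩ budgetSet F).Nonempty)
    (hrec : recessionDirections F b c ∩ asymptoticCone ℝ C ⊆ {0}) :
    ∃ πs ∈ C ∩ budgetSet F, IsMinOn (objective p F b c) (C ∩ budgetSet F) πs := by
  obtain ⟨π₀, hπ₀⟩ := hne
  refine exists_isMinOn_of_asymptoticCone_sublevel_subset (hC.inter isClosed_budgetSet)
    (continuous_objective hp0 hp1.le hF b c).continuousOn hπ₀ fun y hy => hrec ⟨?_, ?_⟩
  · have hsub : {π ∈ C ∩ budgetSet F | objective p F b c π ≤ objective p F b c π₀} ⊆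
        {π ∈ budgetSet F | objective p F b c π ≤ objective p F b c π₀} :=
      fun π hπ => ⟨hπ.1.2, hπ.2⟩
    exact asymptoticCone_sublevel_objective_subset hp0 hp1 hF hc _ (asymptoticCone_mono hsub hy)
  · exact asymptoticCone_mono (fun π hπ => hπ.1.1) hy

end Recession

end Objective

lemma psi_le_psi_of_isMinOn {n : ℕ} {p : ℝ} {F : Measure (EuclideanSpace ℝ (Fin n))}
    {b : EuclideanSpace ℝ (Fin n)} {c : EuclideanSpace ℝ (Fin n) →ₗ[ℝ] EuclideanSpace ℝ (Fin n)}
    {C : Set (EuclideanSpace ℝ (Fin n))} {πs : EuclideanSpace ℝ (Fin n)} (hπs : πs ∈ budgetSet F)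
    (hmin : IsMinOn (objective p F b c) (C ∩ budgetSet F) πs) :
    ∀ π ∈ C, psi n p F b c πs ≤ psi n p F b c π := by
  intro π hπ
  by_cases hbudget : π ∈ budgetSet F
  · have hpsi {ρ : EuclideanSpace ℝ (Fin n)} (hρ : ρ ∈ budgetSet F) :
        psi n p F b c ρ = (objective p F b c ρ : EReal) := if_pos hρ
    rw [hpsi hπs, hpsi hbudget]
    exact EReal.coe_le_coe_iff.mpr (hmin ⟨hπ, hbudget⟩)
  · exact le_top.trans_eq (if_neg hbudget).symm

/-- Let `C ⊆ ℝⁿ` be a nonempty closed convex set with `0 ∈ C`, with recession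
cone `rec(C) = {y | ∀ x ∈ C, ∀ t ≥ 0, x + t·y ∈ C}`. If
`{π | F(Λ₋(π)) = 0, cπ = 0, ∫_{|u|≤1} ⟨π,u⟩ dF ≤ ⟨π,b⟩} ∩ rec(C) = {0}`, then `ψ` attains its
infimum over `C`: there is `π* ∈ C ∩ C₀` with `ψ(π*) ≤ ψ(π)` for all `π ∈ C`. -/
theorem psi_attains_infimum
    (n : ℕ) (hn : 1 ≤ n) (p : ℝ) (hp0 : 0 < p) (hp1 : p < 1)
    (F : Measure (EuclideanSpace ℝ (Fin n)))
    (hF0 : F {(0 : EuclideanSpace ℝ (Fin n))} = 0)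
    (hFlevy : ∫⁻ u, ENNReal.ofReal (min (‖u‖ ^ (2 : ℕ)) 1) ∂F ≠ ⊤)
    (hAF : ∫⁻ u in {u : EuclideanSpace ℝ (Fin n) | 1 < ‖u‖}, ENNReal.ofReal (‖u‖ ^ p) ∂F ≠ ⊤)
    (b : EuclideanSpace ℝ (Fin n))
    (c : EuclideanSpace ℝ (Fin n) →ₗ[ℝ] EuclideanSpace ℝ (Fin n))
    (hcsymm : ∀ x y : EuclideanSpace ℝ (Fin n), ⟪c x, y⟫ = ⟪x, c y⟫)
    (hcpsd : ∀ x : EuclideanSpace ℝ (Fin n), 0 ≤ ⟪x, c x⟫)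
    (C : Set (EuclideanSpace ℝ (Fin n)))
    (hCne : C.Nonempty) (hCcl : IsClosed C) (hCco : Convex ℝ C)
    (h0C : (0 : EuclideanSpace ℝ (Fin n)) ∈ C)
    (hrec : {π : EuclideanSpace ℝ (Fin n) |
        F {u : EuclideanSpace ℝ (Fin n) | ⟪π, u⟫ < 0} = 0 ∧ c π = 0 ∧
        ((∫⁻ u in {u : EuclideanSpace ℝ (Fin n) | ‖u‖ ≤ 1},
            ENNReal.ofReal ⟪π, u⟫ ∂F : ℝ≥0∞) : EReal) ≤ ((⟪π, b⟫ : ℝ) : EReal)} ∩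
      {y : EuclideanSpace ℝ (Fin n) | ∀ x ∈ C, ∀ t : ℝ, 0 ≤ t → x + t • y ∈ C} =
      {0}) :
    ∃ πs : EuclideanSpace ℝ (Fin n),
      πs ∈ C ∧
      F {u : EuclideanSpace ℝ (Fin n) | 1 + ⟪πs, u⟫ < 0} = 0 ∧
      ∀ π ∈ C, psi n p F b c πs ≤ psi n p F b c π := by
  obtain ⟨πs, ⟨hπsC, hπs_budget⟩, hmin⟩ := psi_attains_infimum_general hp0 hp1
    (hasJumpMoments_of_lintegral_ne_top hFlevy hAF) (isPositive_of_inner_map_nonneg hcsymm hcpsd)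
    hCcl ⟨0, h0C, zero_mem_budgetSet⟩
    ((inter_subset_inter_right _ (asymptoticCone_subset_recessionCone hCco hCcl)).trans hrec.subset)
  exact ⟨πs, hπsC, hπs_budget, psi_le_psi_of_isMinOn hπs_budget hmin⟩
end

section
/- Let W, Ŵ : ℝᵈ → ℝ be measurable, let Z ∈ ℝᵈ, and assume all the integrals defining φ(π,Z,W), φ(π,Z,Ŵ) (for each π ∈ K) and f(Z,W), f(Z,Ŵ) converge absolutely, with sup_{π∈K} φ(π,Z,W) and sup_{π∈K} φ(π,Z,Ŵ) finite. Define Ψ(π;u,v) := ( ∫₀¹ e^{λW(v)+(1−λ)Ŵ(v)} dλ ) · (1+⟨π,u⟩)^p − 1, and γ(u,v) := sup_{π∈K} Ψ(π;u,v) if W(v) > Ŵ(v), γ(u,v) := inf_{π∈K} Ψ(π;u,v) if W(v) ≤ Ŵ(v). Assume γ is real-valued F-a.e. and that (u,v) ↦ γ(u,v)·(W(v) − Ŵ(v)) is F-integrable. Then f(Z,W) − f(Z,Ŵ) ≤ ∫ γ(u,v)·(W(v) − Ŵ(v)) F(d(u,v)). -/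
open MeasureTheory
open scoped RealInnerProductSpace ENNReal

/-- `φ(π,Z,W)` from the paper: with `F^R = F.map Prod.fst` the first marginal,
`φ(π,Z,W) = ⟨π, b + c^{RY}Z⟩ + ((p−1)/2)⟨π,c^Rπ⟩
  + ∫ (p⁻¹(1+⟨π,u⟩)^p − p⁻¹ − ⟨π,u⟩·1_{|u|≤1}) dF^R
  + ∫ (p⁻¹(1+⟨π,u⟩)^p − p⁻¹)(e^{W(v)} − 1) dF`. -/
noncomputable def phi14 (n d : ℕ) (p : ℝ)
    (F : Measure (EuclideanSpace ℝ (Fin n) × EuclideanSpace ℝ (Fin d)))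
    (b : EuclideanSpace ℝ (Fin n))
    (cR : EuclideanSpace ℝ (Fin n) →ₗ[ℝ] EuclideanSpace ℝ (Fin n))
    (cRY : EuclideanSpace ℝ (Fin d) →ₗ[ℝ] EuclideanSpace ℝ (Fin n))
    (π : EuclideanSpace ℝ (Fin n)) (Z : EuclideanSpace ℝ (Fin d))
    (W : EuclideanSpace ℝ (Fin d) → ℝ) : ℝ :=
  ⟪π, b + cRY Z⟫ + ((p - 1) / 2) * ⟪π, cR π⟫ +
    (∫ u, (p⁻¹ * (1 + ⟪π, u⟫) ^ p - p⁻¹ -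
      Set.indicator {u : EuclideanSpace ℝ (Fin n) | ‖u‖ ≤ 1}
        (fun u => ⟪π, u⟫) u) ∂(F.map Prod.fst)) +
    ∫ uv : EuclideanSpace ℝ (Fin n) × EuclideanSpace ℝ (Fin d),
      (p⁻¹ * (1 + ⟪π, uv.1⟫) ^ p - p⁻¹) * (Real.exp (W uv.2) - 1) ∂F

/-- The driver `f(Z,W) = (1/2)⟨Z,c^YZ⟩ + p·sup_{π∈K} φ(π,Z,W) − ∫ (W(v)+1−e^{W(v)}) dF^Y`,
with `F^Y = F.map Prod.snd` the second marginal. -/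
noncomputable def f14 (n d : ℕ) (p : ℝ)
    (F : Measure (EuclideanSpace ℝ (Fin n) × EuclideanSpace ℝ (Fin d)))
    (b : EuclideanSpace ℝ (Fin n))
    (cR : EuclideanSpace ℝ (Fin n) →ₗ[ℝ] EuclideanSpace ℝ (Fin n))
    (cRY : EuclideanSpace ℝ (Fin d) →ₗ[ℝ] EuclideanSpace ℝ (Fin n))
    (cY : EuclideanSpace ℝ (Fin d) →ₗ[ℝ] EuclideanSpace ℝ (Fin d))
    (K : Set (EuclideanSpace ℝ (Fin n)))
    (Z : EuclideanSpace ℝ (Fin d)) (W : EuclideanSpace ℝ (Fin d) → ℝ) : ℝ :=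
  (1 / 2) * ⟪Z, cY Z⟫ +
    p * sSup ((fun π => phi14 n d p F b cR cRY π Z W) '' K) -
    ∫ v, (W v + 1 - Real.exp (W v)) ∂(F.map Prod.snd)

/-- `Ψ(π;u,v) := (∫₀¹ e^{λW(v)+(1−λ)Ŵ(v)} dλ)·(1+⟨π,u⟩)^p − 1`. -/
noncomputable def Psi14 (n d : ℕ) (p : ℝ)
    (W Wh : EuclideanSpace ℝ (Fin d) → ℝ)
    (π u : EuclideanSpace ℝ (Fin n)) (v : EuclideanSpace ℝ (Fin d)) : ℝ :=
  (∫ l in (0 : ℝ)..1, Real.exp (l * W v + (1 - l) * Wh v)) * (1 + ⟪π, u⟫) ^ p - 1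

/-- `γ(u,v) := sup_{π∈K} Ψ(π;u,v)` if `W(v) > Ŵ(v)`, and `inf_{π∈K} Ψ(π;u,v)` if
`W(v) ≤ Ŵ(v)`. -/
noncomputable def gamma14 (n d : ℕ) (p : ℝ)
    (K : Set (EuclideanSpace ℝ (Fin n)))
    (W Wh : EuclideanSpace ℝ (Fin d) → ℝ)
    (uv : EuclideanSpace ℝ (Fin n) × EuclideanSpace ℝ (Fin d)) : ℝ :=
  if Wh uv.2 < W uv.2 then
    sSup ((fun π => Psi14 n d p W Wh π uv.1 uv.2) '' K)
  else
    sInf ((fun π => Psi14 n d p W Wh π uv.1 uv.2) '' K)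

/-!
Up to the terms common to `W` and `Ŵ`, the only trace of `W` in `p·φ(π,Z,W) − ∫ (W + 1 − e^W) dF^Y`
is `∫ (g_π·(e^W − 1) − W) dF`, where `g_π(u,v) = (1+⟨π,u⟩)^p`. The fundamental theorem of calculus
along the segment from `Ŵ` to `W` turns the difference of the integrands for `W` and `Ŵ` into
`Ψ(π)·(W − Ŵ)`, and `γ` is selected according to the sign of `W − Ŵ` exactly so that this is at most
`γ·(W − Ŵ)`. The resulting bound is uniform in `π ∈ K`, hence survives the supremum over `K`,
whatever the sign of `p`.
-/

/-- The average of `exp` over the segment from `y` to `x`, i.e. the logarithmic mean of `exp x` and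
`exp y`. -/
noncomputable def expSegmentMean (x y : ℝ) : ℝ :=
  ∫ l in (0 : ℝ)..1, Real.exp (l * x + (1 - l) * y)

theorem expSegmentMean_mul_sub (x y : ℝ) :
    expSegmentMean x y * (x - y) = Real.exp x - Real.exp y := by
  calc expSegmentMean x y * (x - y)
      = (x - y) * ∫ l in (0 : ℝ)..1, Real.exp ((x - y) * l + y) := by
        rw [expSegmentMean, mul_comm]
        ring_nf
    _ = ∫ t in y..x, Real.exp t := by
        rw [intervalIntegral.mul_integral_comp_mul_add]
        simp
    _ = Real.exp x - Real.exp y := integral_exp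

theorem mul_sub_le_ite_csSup_csInf_mul_sub {s : Set ℝ} {t x y : ℝ}
    (hs : if y < x then BddAbove s else BddBelow s) (ht : t ∈ s) :
    t * (x - y) ≤ (if y < x then sSup s else sInf s) * (x - y) := by
  split_ifs at hs ⊢ with hyx
  · exact mul_le_mul_of_nonneg_right (le_csSup hs ht) (sub_nonneg.2 hyx.le)
  · exact mul_le_mul_of_nonpos_right (csInf_le hs ht) (sub_nonpos.2 (not_lt.1 hyx))

section Supremum

variable {ι : Type*} {K : Set ι} {φ ψ : ι → ℝ} {C : ℝ}

theorem csSup_image_le_csSup_image_add (hK : K.Nonempty) (hψ : BddAbove (ψ '' K))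
    (h : ∀ i ∈ K, φ i ≤ ψ i + C) : sSup (φ '' K) ≤ sSup (ψ '' K) + C := by
  refine csSup_le (hK.image φ) ?_
  rintro _ ⟨i, hi, rfl⟩
  exact (h i hi).trans (add_le_add_left (le_csSup hψ ⟨i, hi, rfl⟩) C)

theorem mul_csSup_image_sub_mul_csSup_image_le (p : ℝ) (hK : K.Nonempty)
    (hφ : BddAbove (φ '' K)) (hψ : BddAbove (ψ '' K))
    (h : ∀ i ∈ K, p * φ i - p * ψ i ≤ C) :
    p * sSup (φ '' K) - p * sSup (ψ '' K) ≤ C := by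
  rcases lt_trichotomy p 0 with hp | rfl | hp
  · have hsup : sSup (ψ '' K) ≤ sSup (φ '' K) + -(C / p) :=
      csSup_image_le_csSup_image_add hK hφ fun i hi => by
        have : C / p ≤ φ i - ψ i := by
          rw [div_le_iff_of_neg' hp, mul_sub]
          exact h i hi
        linarith
    rw [← mul_sub, ← div_le_iff_of_neg' hp]
    linarith
  · obtain ⟨i, hi⟩ := hK
    simpa using h i hi
  · have hsup : sSup (φ '' K) ≤ sSup (ψ '' K) + C / p :=
      csSup_image_le_csSup_image_add hK hψ fun i hi => by
        have : φ i - ψ i ≤ C / p := by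
          rw [le_div_iff₀' hp, mul_sub]
          exact h i hi
        linarith
    rw [← mul_sub, ← le_div_iff₀' hp]
    linarith

end Supremum

section Slope

variable {ι α : Type*}

/-- The function `Ψ`: the slope between `w' x` and `w x` of `t ↦ g π x * exp t - t`. -/
noncomputable def expTiltedSlope (g : ι → α → ℝ) (w w' : α → ℝ) (x : α) (π : ι) : ℝ :=
  expSegmentMean (w x) (w' x) * g π x - 1

/-- The function `γ`: the extremal slope over `K`, an upper bound where `w' < w` and a lower bound
elsewhere. -/
noncomputable def extremalSlope (g : ι → α → ℝ) (K : Set ι) (w w' : α → ℝ) (x : α) : ℝ :=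
  if w' x < w x then sSup (expTiltedSlope g w w' x '' K) else sInf (expTiltedSlope g w w' x '' K)

theorem expTiltedSlope_mul_sub (g : ι → α → ℝ) (w w' : α → ℝ) (x : α) (π : ι) :
    expTiltedSlope g w w' x π * (w x - w' x) =
      (g π x * (Real.exp (w x) - 1) - w x) - (g π x * (Real.exp (w' x) - 1) - w' x) := by
  unfold expTiltedSlope
  linear_combination g π x * expSegmentMean_mul_sub (w x) (w' x)

theorem expTiltedSlope_mul_sub_le {g : ι → α → ℝ} {K : Set ι} {w w' : α → ℝ} {x : α} {π : ι}
    (hπ : π ∈ K)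
    (hK : if w' x < w x then BddAbove (expTiltedSlope g w w' x '' K)
      else BddBelow (expTiltedSlope g w w' x '' K)) :
    expTiltedSlope g w w' x π * (w x - w' x) ≤ extremalSlope g K w w' x * (w x - w' x) :=
  mul_sub_le_ite_csSup_csInf_mul_sub hK ⟨π, hπ, rfl⟩

end Slope

section Driver

variable {ι α : Type*} [MeasurableSpace α]

/-- The objective `φ` for an arbitrary family `g` of growth factors in place of `(1 + ⟪π, u⟫) ^ p`,
an arbitrary part `a` that does not involve `w`, and `w` a function on the whole space. -/
noncomputable def expTiltedObjective (μ : Measure α) (p : ℝ) (a : ι → ℝ) (g : ι → α → ℝ)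
    (w : α → ℝ) (π : ι) : ℝ :=
  a π + ∫ x, (p⁻¹ * g π x - p⁻¹) * (Real.exp (w x) - 1) ∂μ

/-- The driver `f` built from `expTiltedObjective`, with `c` in place of the quadratic term
`(1 / 2) * ⟪Z, cY Z⟫`. -/
noncomputable def expTiltedDriver (μ : Measure α) (p c : ℝ) (a : ι → ℝ) (g : ι → α → ℝ)
    (K : Set ι) (w : α → ℝ) : ℝ :=
  c + p * sSup (expTiltedObjective μ p a g w '' K) - ∫ x, (w x + 1 - Real.exp (w x)) ∂μ

variable {μ : Measure α} {p : ℝ} {a : ι → ℝ} {g : ι → α → ℝ} {K : Set ι} {w w' : α → ℝ} {π : ι}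

theorem mul_inv_mul_sub_inv_mul_exp_sub (hp : p ≠ 0) (r t : ℝ) :
    p * ((p⁻¹ * r - p⁻¹) * (Real.exp t - 1)) - (t + 1 - Real.exp t) =
      r * (Real.exp t - 1) - t := by
  field_simp
  ring

theorem integrable_mul_exp_sub_one_sub {G : α → ℝ} (hp : p ≠ 0)
    (hφ : Integrable (fun x => (p⁻¹ * G x - p⁻¹) * (Real.exp (w x) - 1)) μ)
    (hw : Integrable (fun x => w x + 1 - Real.exp (w x)) μ) :
    Integrable (fun x => G x * (Real.exp (w x) - 1) - w x) μ := by
  simpa only [mul_inv_mul_sub_inv_mul_exp_sub hp] using (hφ.const_mul p).sub' hw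

theorem mul_expTiltedObjective_sub_integral (hp : p ≠ 0)
    (hφ : Integrable (fun x => (p⁻¹ * g π x - p⁻¹) * (Real.exp (w x) - 1)) μ)
    (hw : Integrable (fun x => w x + 1 - Real.exp (w x)) μ) :
    p * expTiltedObjective μ p a g w π - ∫ x, (w x + 1 - Real.exp (w x)) ∂μ =
      p * a π + ∫ x, (g π x * (Real.exp (w x) - 1) - w x) ∂μ := by
  simp only [← mul_inv_mul_sub_inv_mul_exp_sub hp]
  rw [integral_sub (hφ.const_mul p) hw, integral_const_mul, expTiltedObjective]
  ring

theorem mul_expTiltedObjective_sub_le (hp : p ≠ 0) (hπ : π ∈ K)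
    (hφ : Integrable (fun x => (p⁻¹ * g π x - p⁻¹) * (Real.exp (w x) - 1)) μ)
    (hφ' : Integrable (fun x => (p⁻¹ * g π x - p⁻¹) * (Real.exp (w' x) - 1)) μ)
    (hw : Integrable (fun x => w x + 1 - Real.exp (w x)) μ)
    (hw' : Integrable (fun x => w' x + 1 - Real.exp (w' x)) μ)
    (hK : ∀ᵐ x ∂μ, if w' x < w x then BddAbove (expTiltedSlope g w w' x '' K)
      else BddBelow (expTiltedSlope g w w' x '' K))
    (hγ : Integrable (fun x => extremalSlope g K w w' x * (w x - w' x)) μ) :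
    p * expTiltedObjective μ p a g w π - p * expTiltedObjective μ p a g w' π ≤
      (∫ x, extremalSlope g K w w' x * (w x - w' x) ∂μ) +
        ((∫ x, (w x + 1 - Real.exp (w x)) ∂μ) - ∫ x, (w' x + 1 - Real.exp (w' x)) ∂μ) := by
  have hgw := integrable_mul_exp_sub_one_sub hp hφ hw
  have hgw' := integrable_mul_exp_sub_one_sub hp hφ' hw'
  have hslope : (∫ x, (g π x * (Real.exp (w x) - 1) - w x) ∂μ) -
        ∫ x, (g π x * (Real.exp (w' x) - 1) - w' x) ∂μ ≤
      ∫ x, extremalSlope g K w w' x * (w x - w' x) ∂μ := by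
    rw [← integral_sub hgw hgw']
    refine integral_mono_ae (hgw.sub hgw') hγ ?_
    filter_upwards [hK] with x hx
    exact (expTiltedSlope_mul_sub g w w' x π).symm.trans_le (expTiltedSlope_mul_sub_le hπ hx)
  have hobj := mul_expTiltedObjective_sub_integral (a := a) hp hφ hw
  have hobj' := mul_expTiltedObjective_sub_integral (a := a) hp hφ' hw'
  linarith

theorem driver_comparison_estimate_general (c : ℝ) (hp : p ≠ 0) (hKne : K.Nonempty)
    (hφ : ∀ π ∈ K, Integrable (fun x => (p⁻¹ * g π x - p⁻¹) * (Real.exp (w x) - 1)) μ)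
    (hφ' : ∀ π ∈ K, Integrable (fun x => (p⁻¹ * g π x - p⁻¹) * (Real.exp (w' x) - 1)) μ)
    (hw : Integrable (fun x => w x + 1 - Real.exp (w x)) μ)
    (hw' : Integrable (fun x => w' x + 1 - Real.exp (w' x)) μ)
    (hbdd : BddAbove (expTiltedObjective μ p a g w '' K))
    (hbdd' : BddAbove (expTiltedObjective μ p a g w' '' K))
    (hK : ∀ᵐ x ∂μ, if w' x < w x then BddAbove (expTiltedSlope g w w' x '' K)
      else BddBelow (expTiltedSlope g w w' x '' K))
    (hγ : Integrable (fun x => extremalSlope g K w w' x * (w x - w' x)) μ) :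
    expTiltedDriver μ p c a g K w - expTiltedDriver μ p c a g K w' ≤
      ∫ x, extremalSlope g K w w' x * (w x - w' x) ∂μ := by
  have hsup := mul_csSup_image_sub_mul_csSup_image_le p hKne hbdd hbdd' fun π hπ =>
    mul_expTiltedObjective_sub_le hp hπ (hφ π hπ) (hφ' π hπ) hw hw' hK hγ
  unfold expTiltedDriver
  linarith

end Driver

theorem f14_eq_expTiltedDriver {n d : ℕ} (p : ℝ)
    {F : Measure (EuclideanSpace ℝ (Fin n) × EuclideanSpace ℝ (Fin d))}
    (b : EuclideanSpace ℝ (Fin n))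
    (cR : EuclideanSpace ℝ (Fin n) →ₗ[ℝ] EuclideanSpace ℝ (Fin n))
    (cRY : EuclideanSpace ℝ (Fin d) →ₗ[ℝ] EuclideanSpace ℝ (Fin n))
    (cY : EuclideanSpace ℝ (Fin d) →ₗ[ℝ] EuclideanSpace ℝ (Fin d))
    (K : Set (EuclideanSpace ℝ (Fin n))) (Z : EuclideanSpace ℝ (Fin d))
    {W : EuclideanSpace ℝ (Fin d) → ℝ}
    (hW : AEStronglyMeasurable (fun v => W v + 1 - Real.exp (W v)) (F.map Prod.snd)) :
    f14 n d p F b cR cRY cY K Z W =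
      expTiltedDriver F p ((1 / 2) * ⟪Z, cY Z⟫)
        (fun π => ⟪π, b + cRY Z⟫ + ((p - 1) / 2) * ⟪π, cR π⟫ +
          ∫ u, (p⁻¹ * (1 + ⟪π, u⟫) ^ p - p⁻¹ -
            Set.indicator {u : EuclideanSpace ℝ (Fin n) | ‖u‖ ≤ 1} (fun u => ⟪π, u⟫) u)
            ∂(F.map Prod.fst))
        (fun π uv => (1 + ⟪π, uv.1⟫) ^ p) K (fun uv => W uv.2) := by
  rw [f14, integral_map measurable_snd.aemeasurable hW]
  rfl

/-- One-sided Lipschitz-type estimate on the driver: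
under absolute convergence of all the integrals defining `φ` and `f`, finiteness of the
suprema over `K`, `γ` being real-valued `F`-a.e. (the relevant sup/inf being attained in `ℝ`),
and `F`-integrability of `(u,v) ↦ γ(u,v)·(W(v) − Ŵ(v))`, one has
`f(Z,W) − f(Z,Ŵ) ≤ ∫ γ(u,v)·(W(v) − Ŵ(v)) dF`. -/
theorem driver_comparison_estimate
    (n d : ℕ) (hn : 1 ≤ n) (hd : 1 ≤ d) (p : ℝ) (hp : p < 1) (hp0 : p ≠ 0)
    (F : Measure (EuclideanSpace ℝ (Fin n) × EuclideanSpace ℝ (Fin d)))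
    (b : EuclideanSpace ℝ (Fin n))
    (cR : EuclideanSpace ℝ (Fin n) →ₗ[ℝ] EuclideanSpace ℝ (Fin n))
    (cRY : EuclideanSpace ℝ (Fin d) →ₗ[ℝ] EuclideanSpace ℝ (Fin n))
    (cY : EuclideanSpace ℝ (Fin d) →ₗ[ℝ] EuclideanSpace ℝ (Fin d))
    (K : Set (EuclideanSpace ℝ (Fin n))) (hKne : K.Nonempty)
    (hK : ∀ π ∈ K,
      (F.map Prod.fst) {u : EuclideanSpace ℝ (Fin n) | 1 + ⟪π, u⟫ < 0} = 0)
    (W Wh : EuclideanSpace ℝ (Fin d) → ℝ)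
    (hWmeas : Measurable W) (hWhmeas : Measurable Wh)
    (Z : EuclideanSpace ℝ (Fin d))
    -- absolute convergence of all the integrals defining φ(π,Z,W), φ(π,Z,Ŵ) on K
    (hint1 : ∀ π ∈ K, Integrable
      (fun u : EuclideanSpace ℝ (Fin n) => p⁻¹ * (1 + ⟪π, u⟫) ^ p - p⁻¹ -
        Set.indicator {u : EuclideanSpace ℝ (Fin n) | ‖u‖ ≤ 1} (fun u => ⟪π, u⟫) u)
      (F.map Prod.fst))
    (hint2W : ∀ π ∈ K, Integrable
      (fun uv : EuclideanSpace ℝ (Fin n) × EuclideanSpace ℝ (Fin d) =>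
        (p⁻¹ * (1 + ⟪π, uv.1⟫) ^ p - p⁻¹) * (Real.exp (W uv.2) - 1)) F)
    (hint2Wh : ∀ π ∈ K, Integrable
      (fun uv : EuclideanSpace ℝ (Fin n) × EuclideanSpace ℝ (Fin d) =>
        (p⁻¹ * (1 + ⟪π, uv.1⟫) ^ p - p⁻¹) * (Real.exp (Wh uv.2) - 1)) F)
    -- absolute convergence of the integrals defining f(Z,W), f(Z,Ŵ)
    (hint3W : Integrable
      (fun v : EuclideanSpace ℝ (Fin d) => W v + 1 - Real.exp (W v)) (F.map Prod.snd))
    (hint3Wh : Integrable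
      (fun v : EuclideanSpace ℝ (Fin d) => Wh v + 1 - Real.exp (Wh v)) (F.map Prod.snd))
    -- sup_{π∈K} φ(π,Z,W) and sup_{π∈K} φ(π,Z,Ŵ) are finite
    (hbddW : BddAbove ((fun π => phi14 n d p F b cR cRY π Z W) '' K))
    (hbddWh : BddAbove ((fun π => phi14 n d p F b cR cRY π Z Wh) '' K))
    -- γ is real-valued F-a.e. (the relevant sup is bounded above / inf bounded below)
    (hγreal : ∀ᵐ uv ∂F,
      if Wh uv.2 < W uv.2 then
        BddAbove ((fun π => Psi14 n d p W Wh π uv.1 uv.2) '' K)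
      else
        BddBelow ((fun π => Psi14 n d p W Wh π uv.1 uv.2) '' K))
    -- γ·(W − Ŵ) is F-integrable
    (hγint : Integrable
      (fun uv : EuclideanSpace ℝ (Fin n) × EuclideanSpace ℝ (Fin d) =>
        gamma14 n d p K W Wh uv * (W uv.2 - Wh uv.2)) F) :
    f14 n d p F b cR cRY cY K Z W - f14 n d p F b cR cRY cY K Z Wh ≤
      ∫ uv : EuclideanSpace ℝ (Fin n) × EuclideanSpace ℝ (Fin d),
        gamma14 n d p K W Wh uv * (W uv.2 - Wh uv.2) ∂F := by
  rw [f14_eq_expTiltedDriver p b cR cRY cY K Z hint3W.aestronglyMeasurable,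
    f14_eq_expTiltedDriver p b cR cRY cY K Z hint3Wh.aestronglyMeasurable]
  exact driver_comparison_estimate_general _ hp0 hKne hint2W hint2Wh
    (hint3W.comp_measurable measurable_snd) (hint3Wh.comp_measurable measurable_snd)
    hbddW hbddWh hγreal hγint
end
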